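/- Let f be a cellular automaton on A^ℤ whose restriction to ω̃(f) is eventually oblique, i.e., for some n ∈ ℕ the map f^n restricted to ω̃(f) has a neighborhood contained in (−∞, −1] or in [1, ∞). Then for every word w ∈ A*: w ∈ L(ω̃(f)) if and only if for every cylinder set [u]_j ⊆ A^ℤ there exist infinitely many t ∈ ℕ with f^t([u]_j) ∩ [w] ≠ ∅. -/

import Mathlib

open Filter Set Function

namespace Gls

variable {A : Type*}

/-- The left shift map on `A^ℤ`. -/
def shift (x : ℤ → A) : ℤ → A := fun i => x (i + 1)

/-- A cellular automaton: a continuous shift-commuting self-map of the full shift. -/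
def IsCA [TopologicalSpace A] (f : (ℤ → A) → (ℤ → A)) : Prop :=
  Continuous f ∧ f ∘ shift = shift ∘ f

/-- The set of limit points of the forward orbit of `x` under `f`. -/
def omegaSet [TopologicalSpace A] (f : (ℤ → A) → (ℤ → A)) (x : ℤ → A) : Set (ℤ → A) :=
  {y | MapClusterPt y atTop fun t => f^[t] x}

/-- The realm of attraction of `Y`. -/
def realm [TopologicalSpace A] (f : (ℤ → A) → (ℤ → A)) (Y : Set (ℤ → A)) : Set (ℤ → A) :=
  {x | omegaSet f x ⊆ Y}

/-- The generic limit set: the intersection of all closed sets whose realm is comeager. -/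
def genLimitSet [TopologicalSpace A] (f : (ℤ → A) → (ℤ → A)) : Set (ℤ → A) :=
  ⋂₀ {C | IsClosed C ∧ realm f C ∈ residual (ℤ → A)}

/-- The word `x_{[i, i+n)}` of length `n` read in the configuration `x` from position `i`. -/
def word (x : ℤ → A) (i : ℤ) (n : ℕ) : List A :=
  (List.range n).map fun k => x (i + k)

/-- The cylinder set `[w]_i`. -/
def cylinder (w : List A) (i : ℤ) : Set (ℤ → A) := {x | word x i w.length = w}

/-- The language of `X`: all finite words occurring in points of `X`. -/
def lang (X : Set (ℤ → A)) : Set (List A) :=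
  {w | ∃ x ∈ X, ∃ i : ℤ, word x i w.length = w}


/-- The restriction of `f` to `X` is eventually oblique: for some `n`, the map `f^n`
restricted to `X` has a neighborhood `[a, b]` contained in `(-∞, -1]` or in `[1, ∞)`,
i.e. for `x ∈ X`, the symbol `f^n(x)_0` only depends on `x_{[a,b]}`. -/
def EventuallyOblique {A : Type*} (f : (ℤ → A) → (ℤ → A)) (X : Set (ℤ → A)) : Prop :=
  ∃ (n : ℕ) (a b : ℤ), a ≤ b ∧ (b ≤ -1 ∨ 1 ≤ a) ∧
    ∀ x ∈ X, ∀ y ∈ X, (∀ i : ℤ, a ≤ i → i ≤ b → x i = y i) → f^[n] x 0 = f^[n] y 0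

/-!
By the Baire category theorem, every nonempty open set contains a nonempty open set whose points
stay, from some time on, in a given neighborhood of `ω̃(f)`. This shows that a word enabled by the
empty word occurs in `ω̃(f)`. Conversely, if `w` occurs in `ω̃(f)`, then there is a nonempty open
set `V` such that every nonempty open `W ⊆ V` visits `[w]` infinitely often, and it remains to
transport these visits from `V` to an arbitrary nonempty open set `U`.

Reflecting if necessary, suppose that `f^n` is left oblique on `ω̃(f)`; by compactness it is so on a
neighborhood `G`. Choose a block that keeps the orbit in `G` at sufficiently many consecutive
positions. Such a block is a barrier: to its left, the evolution does not depend on what lies far to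
its right. Let `x ∈ V` and `y ∈ U` both contain the block far to the left, and let `z ∈ U` be
obtained by gluing the left half of `x` to the right half of `y`. The orbits of `x` and `z` agree
behind the barrier forever. As long as both orbits also look like `G` to the right of the barrier,
obliqueness makes the agreement advance by one cell every `n` steps, so `z` eventually shows the
same symbols as `x` in the window of `w`.
-/

/-! ### Translation, reflection and cylinders -/

section Configurations

variable [TopologicalSpace A]

/-- Translation by `p`, that is the power `σ^p` of the shift, as a self-homeomorphism of `A^ℤ`. -/
def translate (p : ℤ) : (ℤ → A) ≃ₜ (ℤ → A) :=
  (Homeomorph.piCongrLeft (Y := fun _ => A) (Equiv.addRight p)).symm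

@[simp]
lemma translate_apply (p : ℤ) (x : ℤ → A) (i : ℤ) : translate p x i = x (i + p) := rfl

lemma translate_add (p q : ℤ) :
    (translate (p + q) : (ℤ → A) → ℤ → A) = translate p ∘ translate q := by
  ext x i
  simp [add_assoc]

lemma eqOn_translate {p c : ℤ} {x y : ℤ → A} :
    EqOn (translate p x) (translate p y) (Iio c) ↔ EqOn x y (Iio (c + p)) := by
  refine ⟨fun h i hi => ?_, fun h i hi => h (add_lt_add_left hi p)⟩
  simpa using h (show i - p < c from sub_lt_iff_lt_add.2 hi)

/-- The reflection `x ↦ (x_{-i})_i` of `A^ℤ`, used to exchange left and right. -/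
def reflect : (ℤ → A) ≃ₜ (ℤ → A) :=
  (Homeomorph.piCongrLeft (Y := fun _ => A) (Equiv.neg ℤ)).symm

@[simp]
lemma reflect_apply (x : ℤ → A) (i : ℤ) : reflect x i = x (-i) := rfl

@[simp]
lemma reflect_reflect (x : ℤ → A) : reflect (reflect x) = x := by
  ext i
  simp

lemma semiconj_reflect (f : (ℤ → A) → ℤ → A) : Semiconj reflect f (reflect ∘ f ∘ reflect) :=
  fun x => by simp

lemma semiconj_reflect_conj (f : (ℤ → A) → ℤ → A) : Semiconj reflect (reflect ∘ f ∘ reflect) f :=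
  fun x => by simp

lemma continuous_piecewise_left (S : Set ℤ) [∀ i, Decidable (i ∈ S)] (y : ℤ → A) :
    Continuous fun x : ℤ → A => S.piecewise x y := by
  refine continuous_pi fun i => ?_
  by_cases hi : i ∈ S
  · simpa [hi] using continuous_apply i
  · simpa [hi] using continuous_const

lemma isClosed_setOf_eqOn [T2Space A] (S : Set ℤ) :
    IsClosed {p : (ℤ → A) × (ℤ → A) | EqOn p.1 p.2 S} := by
  simp only [EqOn, ofPred_forall]
  exact isClosed_biInter fun i _ => isClosed_eq (by fun_prop) (by fun_prop)

lemma isOpen_setOf_apply_eq [DiscreteTopology A] {f : (ℤ → A) → ℤ → A} (hf : Continuous f) (i : ℤ) :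
    IsOpen {p : (ℤ → A) × (ℤ → A) | f p.1 i = f p.2 i} :=
  (isOpen_discrete {q : A × A | q.1 = q.2}).preimage
    (f := fun p : (ℤ → A) × (ℤ → A) => (f p.1 i, f p.2 i)) (by fun_prop)

end Configurations

-- In `word`, `k` has type `ℤ`, so `List.range n` is coerced to `List ℤ` through the list monad.
lemma word_eq_map_range (x : ℤ → A) (i : ℤ) (n : ℕ) :
    word x i n = (List.range n).map fun k : ℕ => x (i + (k : ℤ)) := by
  simp only [word, List.bind_eq_flatMap, List.pure_def, ← List.map_eq_flatMap, List.map_map]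
  rfl

lemma mem_cylinder {w : List A} {i : ℤ} {x : ℤ → A} :
    x ∈ cylinder w i ↔ ∀ (k : ℕ) (hk : k < w.length), x (i + k) = w[k] := by
  simp [cylinder, word_eq_map_range, List.ext_getElem_iff]

lemma mem_cylinder_congr {w : List A} {i : ℤ} {x y : ℤ → A}
    (h : EqOn x y (Ico i (i + w.length))) : x ∈ cylinder w i ↔ y ∈ cylinder w i := by
  have hword : word x i w.length = word y i w.length := by
    simp only [word_eq_map_range]
    refine List.map_congr_left fun k hk => h ⟨by omega, ?_⟩
    have := List.mem_range.1 hk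
    omega
  simp only [cylinder, mem_ofPred, hword]

lemma mem_cylinder_word {x y : ℤ → A} {i : ℤ} {n : ℕ} :
    y ∈ cylinder (word x i n) i ↔ EqOn y x (Ico i (i + n)) := by
  simp only [mem_cylinder, word_eq_map_range, List.length_map, List.length_range,
    List.getElem_map, List.getElem_range]
  refine ⟨fun h j hj => ?_, fun h k hk => h ⟨by omega, by omega⟩⟩
  obtain ⟨k, rfl⟩ := Int.le.dest hj.1
  exact h k (by have := hj.2; omega)

lemma cylinder_nonempty [Nonempty A] (w : List A) (i : ℤ) : (cylinder w i).Nonempty := by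
  inhabit A
  exact ⟨fun k => w.getD (k - i).toNat default, mem_cylinder.2 fun k hk => by simp [hk]⟩

lemma translate_mem_cylinder [TopologicalSpace A] {w : List A} {i p : ℤ} {x : ℤ → A} :
    translate p x ∈ cylinder w i ↔ x ∈ cylinder w (i + p) := by
  simp only [mem_cylinder, translate_apply, add_right_comm]

section CylinderTopology

variable [TopologicalSpace A] [DiscreteTopology A]

lemma isClopen_cylinder (w : List A) (i : ℤ) : IsClopen (cylinder w i) := by
  have hw : cylinder w i = ⋂ k : Fin w.length, (fun x : ℤ → A => x (i + k)) ⁻¹' {w[k]} := by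
    ext x
    simp [mem_cylinder, Fin.forall_iff]
  rw [hw]
  exact isClopen_iInter_of_finite fun k =>
    (isClopen_discrete {w[k]}).preimage (continuous_apply (i + (k : ℤ)))

lemma isTopologicalBasis_cylinder :
    TopologicalSpace.IsTopologicalBasis {S : Set (ℤ → A) | ∃ w i, cylinder w i = S} := by
  refine TopologicalSpace.isTopologicalBasis_of_isOpen_of_nhds ?_ fun x U hx hU => ?_
  · rintro _ ⟨w, i, rfl⟩
    exact (isClopen_cylinder w i).isOpen
  · obtain ⟨I, u, hu, hIU⟩ := isOpen_pi_iff.1 hU x hx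
    set N : ℕ := I.sup Int.natAbs + 1
    refine ⟨_, ⟨word x (-N) (2 * N), -N, rfl⟩, mem_cylinder_word.2 (eqOn_refl _ _),
      fun y hy => hIU fun i hi => ?_⟩
    have hiN : i.natAbs < N := Nat.lt_succ_of_le (Finset.le_sup (f := Int.natAbs) hi)
    rw [mem_cylinder_word.1 hy ⟨by omega, by push_cast; omega⟩]
    exact (hu i hi).2

lemma exists_cylinder_subset {U : Set (ℤ → A)} (hU : IsOpen U) (hU' : U.Nonempty) :
    ∃ (w : List A) (i : ℤ), (cylinder w i).Nonempty ∧ cylinder w i ⊆ U := by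
  obtain ⟨x, hx⟩ := hU'
  obtain ⟨_, ⟨w, i, rfl⟩, hxw, hw⟩ := isTopologicalBasis_cylinder.exists_subset_of_mem_open hx hU
  exact ⟨w, i, ⟨x, hxw⟩, hw⟩

-- `B` only constrains cells to the left of `s`, and `V` is entered by fixing cells to the right of
-- `s`, so both survive gluing at `s`.
lemma exists_barrier {U V Z : Set (ℤ → A)} (hU : IsOpen U) (hU' : U.Nonempty) (hV : IsOpen V)
    (hV' : V.Nonempty) (hZ : IsOpen Z) (hZ' : Z.Nonempty) (R : ℕ) :
    ∃ (c s : ℤ) (B : Set (ℤ → A)), c + R ≤ s ∧ IsOpen B ∧ MapsTo (translate c) B Z ∧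
      (B ∩ U).Nonempty ∧ (∀ x ∈ B, ∀ y, EqOn x y (Iio s) → y ∈ B) ∧
      ∃ v, ∀ x, (Iio s).piecewise x v ∈ V := by
  obtain ⟨wU, i, ⟨u, hu⟩, hwU⟩ := exists_cylinder_subset hU hU'
  obtain ⟨wV, j, ⟨v, hv⟩, hwV⟩ := exists_cylinder_subset hV hV'
  obtain ⟨wZ, k, ⟨z, hz⟩, hwZ⟩ := exists_cylinder_subset hZ hZ'
  set s := min i j
  set c := min (s - R) (s - k - wZ.length)
  have hright {w : List A} {m : ℤ} (hm : s ≤ m) {x y : ℤ → A} (hy : y ∈ cylinder w m) :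
      (Iio s).piecewise x y ∈ cylinder w m :=
    (mem_cylinder_congr fun l hl =>
      piecewise_eq_of_notMem (Iio s) x y (not_lt.2 (hm.trans hl.1))).2 hy
  have hleft {x y : ℤ → A} (hxy : EqOn x y (Iio s)) (hx : x ∈ cylinder wZ (k + c)) :
      y ∈ cylinder wZ (k + c) := by
    refine (mem_cylinder_congr (hxy.mono fun l hl => ?_)).1 hx
    have := hl.2
    exact mem_Iio.2 (by omega)
  have hshift : translate (-c) z ∈ cylinder wZ (k + c) := by
    simpa [translate_mem_cylinder] using hz
  refine ⟨c, s, cylinder wZ (k + c), by omega, (isClopen_cylinder _ _).isOpen,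
    fun x hx => hwZ (translate_mem_cylinder.2 hx),
    ⟨(Iio s).piecewise (translate (-c) z) u, hleft (piecewise_eqOn _ _ _).symm hshift,
      hwU (hright (min_le_left i j) hu)⟩, fun x hx y hxy => hleft hxy hx,
    v, fun x => hwV (hright (min_le_right i j) hv)⟩

end CylinderTopology

/-! ### Generic limit sets -/

section GenericLimitSet

variable [TopologicalSpace A] {f g : (ℤ → A) → ℤ → A}

lemma isClosed_genLimitSet (f : (ℤ → A) → ℤ → A) : IsClosed (genLimitSet f) :=
  isClosed_sInter fun _ hC => hC.1

lemma map_mem_genLimitSet (h : (ℤ → A) ≃ₜ (ℤ → A)) (hfg : Semiconj h f g) {x : ℤ → A}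
    (hx : x ∈ genLimitSet f) : h x ∈ genLimitSet g := by
  rintro C ⟨hC, hres⟩
  refine hx (h ⁻¹' C) ⟨hC.preimage h.continuous, ?_⟩
  have hpre : h ⁻¹' realm g C ∈ residual (ℤ → A) := by
    rwa [← h.residual_map_eq] at hres
  refine mem_of_superset hpre fun z hz y hy => hz ?_
  have horbit : (fun t => g^[t] (h z)) = h ∘ fun t => f^[t] z :=
    funext fun t => ((hfg.iterate_right t) z).symm
  rw [omegaSet, mem_ofPred, horbit]
  exact MapClusterPt.continuousAt_comp h.continuous.continuousAt hy

lemma genLimitSet_subset {C : Set (ℤ → A)} (hC : IsClosed C)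
    (h : ∀ᶠ x in residual (ℤ → A), ∀ᶠ t in atTop, f^[t] x ∈ C) : genLimitSet f ⊆ C :=
  sInter_subset_of_mem ⟨hC, h.mono fun _ hx _ hy => hC.mem_of_mapClusterPt hy hx⟩

lemma exists_isOpen_frequently_image_inter {O : Set (ℤ → A)} (hO : IsOpen O)
    (h : (genLimitSet f ∩ O).Nonempty) :
    ∃ V : Set (ℤ → A), IsOpen V ∧ V.Nonempty ∧ ∀ W ⊆ V, IsOpen W → W.Nonempty →
      ∃ᶠ t in atTop, (f^[t] '' W ∩ O).Nonempty := by
  by_contra! hcon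
  let avoiding : Set (Set (ℤ → A)) := {W | IsOpen W ∧ ∀ᶠ t in atTop, f^[t] '' W ∩ O = ∅}
  have hdense : Dense (⋃₀ avoiding) := by
    refine dense_iff_inter_open.2 fun V hV hV' => ?_
    obtain ⟨W, hWV, hW, ⟨x, hx⟩, hWO⟩ := hcon V hV hV'
    exact ⟨x, hWV hx, W, ⟨hW, by simpa [not_nonempty_iff_eq_empty] using hWO⟩, hx⟩
  have hsub : genLimitSet f ⊆ Oᶜ := by
    refine genLimitSet_subset hO.isClosed_compl (mem_of_superset
      (residual_of_dense_open (isOpen_sUnion fun W hW => hW.1) hdense) ?_)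
    rintro x ⟨W, ⟨-, hWO⟩, hx⟩
    exact hWO.mono fun t ht hxO => ht.subset ⟨mem_image_of_mem _ hx, hxO⟩
  obtain ⟨x, hx, hxO⟩ := h
  exact hsub hx hxO

variable [CompactSpace A]

lemma eventually_residual_eventually_iterate_mem {G : Set (ℤ → A)} (hG : IsOpen G)
    (h : genLimitSet f ⊆ G) : ∀ᶠ x in residual (ℤ → A), ∀ᶠ t in atTop, f^[t] x ∈ G := by
  let attracting : Set (Set (ℤ → A)) := {C | IsClosed C ∧ realm f C ∈ residual (ℤ → A)}
  have : Nonempty attracting := ⟨univ, isClosed_univ, univ_mem' fun _ _ _ => mem_univ _⟩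
  have hdir : Directed (· ⊇ ·) ((↑) : attracting → Set (ℤ → A)) := fun C D =>
    ⟨⟨C ∩ D, C.2.1.inter D.2.1,
      mem_of_superset (inter_mem C.2.2 D.2.2) fun _ hx => subset_inter hx.1 hx.2⟩,
      inter_subset_left, inter_subset_right⟩
  obtain ⟨C, hCG⟩ := exists_subset_nhds_of_compactSpace hdir (fun C => C.2.1) fun x hx =>
    hG.mem_nhds (h (by rwa [genLimitSet, sInter_eq_iInter]))
  refine mem_of_superset C.2.2 fun x hx => ?_
  by_contra hfreq
  obtain ⟨y, hyG, hy⟩ :=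
    hG.isClosed_compl.isCompact.exists_mapClusterPt_of_frequently (not_eventually.1 hfreq)
  exact hyG (hCG (hx hy))

variable [T2Space A]

lemma exists_isOpen_forall_iterate_mem (hf : Continuous f) {G : Set (ℤ → A)} (hG : IsOpen G)
    (h : genLimitSet f ⊆ G) {U : Set (ℤ → A)} (hU : IsOpen U) (hU' : U.Nonempty) :
    ∃ V ⊆ U, IsOpen V ∧ V.Nonempty ∧ ∃ T, ∀ x ∈ V, ∀ t ≥ T, f^[t] x ∈ G := by
  obtain ⟨G', hG', hsub, hG'G⟩ := normal_exists_closure_subset (isClosed_genLimitSet f) hG h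
  let trapped (T : ℕ) : Set (ℤ → A) := {x | ∀ t ≥ T, f^[t] x ∈ closure G'}
  have hclosed (T : ℕ) : IsClosed (trapped T) := by
    simp only [trapped, ofPred_forall]
    exact isClosed_biInter fun t _ => isClosed_closure.preimage (hf.iterate t)
  obtain ⟨s, hs, hsG, hsd⟩ :=
    mem_residual.1 (eventually_residual_eventually_iterate_mem hG' hsub)
  have hdense : Dense (⋃ T, interior (trapped T)) := by
    refine hsG.dense_iUnion_interior_of_closed hsd hclosed fun x hx => ?_
    obtain ⟨T, hT⟩ := eventually_atTop.1 (hs hx)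
    exact mem_iUnion.2 ⟨T, fun t ht => subset_closure (hT t ht)⟩
  obtain ⟨x, hxU, hx⟩ := hdense.inter_open_nonempty U hU hU'
  obtain ⟨T, hT⟩ := mem_iUnion.1 hx
  exact ⟨U ∩ interior (trapped T), inter_subset_left, hU.inter isOpen_interior, ⟨x, hxU, hT⟩, T,
    fun y hy t ht => hG'G (interior_subset hy.2 t ht)⟩

lemma genLimitSet_inter_nonempty_of_frequently [Nonempty A] (hf : Continuous f) {K : Set (ℤ → A)}
    (hK : IsClosed K)
    (h : ∀ U : Set (ℤ → A), IsOpen U → U.Nonempty → ∃ᶠ t in atTop, (f^[t] '' U ∩ K).Nonempty) :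
    (genLimitSet f ∩ K).Nonempty := by
  by_contra hempty
  have hsub : genLimitSet f ⊆ Kᶜ := fun x hx hxK => hempty ⟨x, hx, hxK⟩
  obtain ⟨V, -, hV, hV', T, hT⟩ :=
    exists_isOpen_forall_iterate_mem hf hK.isOpen_compl hsub isOpen_univ univ_nonempty
  obtain ⟨t, ⟨_, ⟨y, hy, rfl⟩, hyK⟩, ht⟩ :=
    ((h V hV hV').and_eventually (eventually_ge_atTop T)).exists
  exact hT y hy t ht hyK

end GenericLimitSet

/-! ### Cellular automata -/

/-- `f` has right radius `r`: the symbol `f(x)_i` only depends on `x_{(-∞, i + r]}`. -/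
def HasRightRadius (f : (ℤ → A) → ℤ → A) (r : ℕ) : Prop :=
  ∀ ⦃x y : ℤ → A⦄ ⦃c : ℤ⦄, EqOn x y (Iio (c + r)) → EqOn (f x) (f y) (Iio c)

lemma HasRightRadius.iterate {f : (ℤ → A) → ℤ → A} {r : ℕ} (hr : HasRightRadius f r) (t : ℕ) :
    HasRightRadius f^[t] (r * t) := by
  induction t with
  | zero => exact fun x y c h => by simpa using h
  | succ t ih =>
    intro x y c h
    rw [iterate_succ_apply', iterate_succ_apply']
    refine hr (ih (h.mono (Iio_subset_Iio ?_)))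
    push_cast
    linarith

section CellularAutomata

variable [TopologicalSpace A] {f g : (ℤ → A) → ℤ → A}

lemma IsCA.commute_translate (hf : IsCA f) (p : ℤ) : Function.Commute f (translate p) := by
  have hone : Function.Commute f (translate 1) := congrFun hf.2
  have hneg : Function.Commute f (translate (-1)) :=
    hone.inverses_right (fun x => by ext; simp) (fun x => by ext; simp)
  induction p using Int.induction_on with
  | zero => exact fun x => by simp [show ∀ y : ℤ → A, translate 0 y = y from fun y => by ext; simp]
  | succ p ih => rw [translate_add]; exact ih.comp_right hone
  | pred p ih => rw [sub_eq_add_neg, translate_add]; exact ih.comp_right hneg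

lemma IsCA.conj_reflect (hf : IsCA f) : IsCA (reflect ∘ f ∘ reflect) := by
  refine ⟨reflect.continuous.comp (hf.1.comp reflect.continuous), ?_⟩
  ext x i
  have hshift : reflect (shift x) = translate (-1) (reflect x) := by
    ext j
    simp [shift, add_comm]
  simp [hshift, (hf.commute_translate (-1)).eq, shift, add_comm]

lemma IsCA.translate_mem_genLimitSet (hf : IsCA f) (p : ℤ) {x : ℤ → A}
    (hx : x ∈ genLimitSet f) : translate p x ∈ genLimitSet f :=
  map_mem_genLimitSet (translate p) (hf.commute_translate p).symm hx

lemma IsCA.exists_hasRightRadius [Finite A] [DiscreteTopology A] (hf : IsCA f) :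
    ∃ r, HasRightRadius f r := by
  let agreeing (r : ℕ) : Set ((ℤ → A) × (ℤ → A)) := {p | EqOn p.1 p.2 (Iio (r : ℤ))}
  have hdir : Directed (· ⊇ ·) agreeing := directed_of_isDirected_le fun r s hrs p hp =>
    hp.mono (Iio_subset_Iio (by exact_mod_cast hrs))
  obtain ⟨r, hr⟩ := exists_subset_nhds_of_compactSpace hdir
    (fun r => isClosed_setOf_eqOn (Iio (r : ℤ))) fun p hp =>
      (isOpen_setOf_apply_eq hf.1 0).mem_nhds (congrArg (f · 0) (funext fun i =>
        mem_iInter.1 hp (i.toNat + 1) (mem_Iio.2 (by push_cast; omega))))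
  refine ⟨r, fun x y c hxy i hi => ?_⟩
  have hagree : EqOn (translate i x) (translate i y) (Iio r) :=
    eqOn_translate.2 (hxy.mono (Iio_subset_Iio (by rw [mem_Iio] at hi; omega)))
  have h0 : f (translate i x) 0 = f (translate i y) 0 := @hr (translate i x, translate i y) hagree
  simpa [(hf.commute_translate i).eq] using h0

/-- `g` is left oblique on `X`: for `x ∈ X`, the symbol `g(x)_0` only depends on `x_{(-∞, -1]}`.
The neighborhood is allowed to be infinite, so that it needs no bookkeeping. -/
def IsLeftObliqueOn (g : (ℤ → A) → ℤ → A) (X : Set (ℤ → A)) : Prop :=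
  ∀ ⦃x⦄, x ∈ X → ∀ ⦃y⦄, y ∈ X → EqOn x y (Iio 0) → g x 0 = g y 0

namespace IsLeftObliqueOn

variable {X G : Set (ℤ → A)}

lemma apply_eq (hX : IsLeftObliqueOn g X) {i : ℤ} (hg : Function.Commute g (translate i))
    {x y : ℤ → A} (hx : translate i x ∈ X) (hy : translate i y ∈ X) (hxy : EqOn x y (Iio i)) :
    g x i = g y i := by
  have h0 := hX hx hy (eqOn_translate.2 (by rwa [zero_add]))
  simpa [hg.eq] using h0

-- This turns the exponent `n = 0` into `n = 1`: a left half extends to at most one point of `X`.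
lemma of_id (hX : IsLeftObliqueOn id X) (hinv : ∀ p, MapsTo (translate p) X X) :
    IsLeftObliqueOn g X := by
  intro x hx y hy hxy
  have hext (k : ℕ) : EqOn x y (Iio (k : ℤ)) := by
    induction k with
    | zero => exact hxy
    | succ k ih =>
      intro i hi
      rcases (show i ≤ k from Int.lt_add_one_iff.1 (by exact_mod_cast hi)).lt_or_eq with hik | rfl
      · exact ih hik
      · exact hX.apply_eq (fun _ => rfl) (hinv k hx) (hinv k hy) ih
  have hxy : x = y := funext fun i => hext (i.toNat + 1) (mem_Iio.2 (by push_cast; omega))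
  rw [hxy]

lemma exists_isOpen [DiscreteTopology A] (hX : IsLeftObliqueOn g X) (hg : Continuous g)
    (hXc : IsCompact X) : ∃ G, IsOpen G ∧ X ⊆ G ∧ IsLeftObliqueOn g G := by
  obtain ⟨u, v, hu, hv, hXu, hXv, huv⟩ := generalized_tube_lemma hXc hXc
    ((isClosed_setOf_eqOn (Iio 0)).isOpen_compl.union (isOpen_setOf_apply_eq hg 0))
    fun p hp => or_iff_not_imp_left.2 fun hagree => hX hp.1 hp.2 (not_not.1 hagree)
  exact ⟨u ∩ v, hu.inter hv, subset_inter hXu hXv, fun x hx y hy hxy =>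
    (huv (mk_mem_prod hx.1 hy.2)).resolve_left (not_not.2 hxy)⟩

end IsLeftObliqueOn

lemma IsLeftObliqueOn.exists_ne_zero {n : ℕ} (hobl : IsLeftObliqueOn f^[n] (genLimitSet f))
    (hf : IsCA f) : ∃ m ≠ 0, IsLeftObliqueOn f^[m] (genLimitSet f) := by
  rcases eq_or_ne n 0 with rfl | hn
  · exact ⟨1, one_ne_zero, hobl.of_id fun p _ => hf.translate_mem_genLimitSet p⟩
  · exact ⟨n, hn, hobl⟩

lemma EventuallyOblique.isLeftObliqueOn_or_reflect (hobl : EventuallyOblique f (genLimitSet f)) :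
    ∃ n, IsLeftObliqueOn f^[n] (genLimitSet f) ∨
      IsLeftObliqueOn (reflect ∘ f ∘ reflect)^[n] (genLimitSet (reflect ∘ f ∘ reflect)) := by
  obtain ⟨n, a, b, -, hside, hn⟩ := hobl
  refine ⟨n, hside.imp (fun hb x hx y hy hxy => hn x hx y hy fun i _ hi => ?_)
    fun ha x hx y hy hxy => ?_⟩
  · exact hxy (mem_Iio.2 (by omega))
  · have h0 := hn _ (map_mem_genLimitSet reflect (semiconj_reflect_conj f) hx) _
      (map_mem_genLimitSet reflect (semiconj_reflect_conj f) hy) fun i hi _ => ?_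
    · have hiter := (semiconj_reflect_conj f).iterate_right n
      simpa only [← hiter.eq, reflect_apply, neg_zero] using h0
    · rw [reflect_apply, reflect_apply]
      exact hxy (mem_Iio.2 (by omega))

/-- The points whose orbit looks like `G` around every position `i ∈ I` from time `T` on. -/
def settled (f : (ℤ → A) → ℤ → A) (G : Set (ℤ → A)) (I : Set ℤ) (T : ℕ) : Set (ℤ → A) :=
  {x | ∀ t ≥ T, ∀ i ∈ I, translate i (f^[t] x) ∈ G}

lemma settled_mono {G : Set (ℤ → A)} {I J : Set ℤ} {S T : ℕ} (hIJ : I ⊆ J) (hST : S ≤ T) :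
    settled f G J S ⊆ settled f G I T :=
  fun _ hx t ht i hi => hx t (hST.trans ht) i (hIJ hi)

lemma IsCA.mem_settled_of_translate_mem (hf : IsCA f) {G : Set (ℤ → A)} {a b c : ℤ} {T : ℕ}
    {x : ℤ → A} (hx : translate c x ∈ settled f G (Ico a b) T) :
    x ∈ settled f G (Ico (a + c) (b + c)) T := by
  intro t ht i hi
  have := hx t ht (i - c) ⟨by linarith [hi.1], by linarith [hi.2]⟩
  rwa [((hf.commute_translate c).iterate_left t).eq, ← comp_apply (f := translate (i - c)),
    ← translate_add, sub_add_cancel] at this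

lemma IsCA.exists_isOpen_subset_settled [CompactSpace A] [T2Space A] (hf : IsCA f)
    {G : Set (ℤ → A)} (hG : IsOpen G) (h : genLimitSet f ⊆ G) {I : Set ℤ} (hI : I.Finite)
    {U : Set (ℤ → A)} (hU : IsOpen U) (hU' : U.Nonempty) :
    ∃ V ⊆ U, IsOpen V ∧ V.Nonempty ∧ ∃ T, V ⊆ settled f G I T := by
  have hopen : IsOpen (⋂ i ∈ I, translate i ⁻¹' G) :=
    hI.isOpen_biInter fun i _ => hG.preimage (translate i).continuous
  have hsub : genLimitSet f ⊆ ⋂ i ∈ I, translate i ⁻¹' G :=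
    fun x hx => mem_iInter₂.2 fun i _ => h (hf.translate_mem_genLimitSet i hx)
  obtain ⟨V, hVU, hV, hV', T, hT⟩ := exists_isOpen_forall_iterate_mem hf.1 hopen hsub hU hU'
  exact ⟨V, hVU, hV, hV', T, fun x hx t ht => mem_iInter₂.1 (hT x hx t ht)⟩

section Comparison

variable {G : Set (ℤ → A)} {n : ℕ} {x y : ℤ → A} {c : ℤ} {T : ℕ}

lemma eqOn_iterate_of_settled (hf : IsCA f) {r : ℕ} (hr : HasRightRadius f r) (hn : n ≠ 0)
    (hG : IsLeftObliqueOn f^[n] G)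
    (hx : x ∈ settled f G (Ico (c - (r * n : ℕ)) c) T)
    (hy : y ∈ settled f G (Ico (c - (r * n : ℕ)) c) T)
    (hxy : EqOn x y (Iio (c + (r * (T + n) : ℕ)))) (t : ℕ) :
    EqOn (f^[t] x) (f^[t] y) (Iio c) := by
  induction t using Nat.strong_induction_on with
  | _ t ih =>
    rcases lt_or_ge t (T + n) with ht | ht
    · have hle : r * t ≤ r * (T + n) := Nat.mul_le_mul_left r ht.le
      exact hr.iterate t (hxy.mono (Iio_subset_Iio (by omega)))
    obtain ⟨s, rfl⟩ := Nat.exists_eq_add_of_le' ((Nat.le_add_left n T).trans ht)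
    have hs : EqOn (f^[s] x) (f^[s] y) (Iio c) := ih s (by omega)
    intro i hi
    rw [add_comm s, iterate_add_apply, iterate_add_apply]
    rcases lt_or_ge i (c - (r * n : ℕ)) with hfar | hnear
    · exact hr.iterate n (hs.mono (Iio_subset_Iio (by omega))) hfar
    · exact hG.apply_eq ((hf.commute_translate i).iterate_left n) (hx s (by omega) i ⟨hnear, hi⟩)
        (hy s (by omega) i ⟨hnear, hi⟩) (hs.mono (Iio_subset_Iio (le_of_lt hi)))

lemma eqOn_iterate_Iio_add (hf : IsCA f) (hG : IsLeftObliqueOn f^[n] G) (k : ℕ)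
    (hx : x ∈ settled f G (Ico c (c + k)) T) (hy : y ∈ settled f G (Ico c (c + k)) T)
    (hxy : ∀ t, EqOn (f^[t] x) (f^[t] y) (Iio c)) {t : ℕ} (ht : T + n * k ≤ t) :
    EqOn (f^[t] x) (f^[t] y) (Iio (c + k)) := by
  induction k generalizing t with
  | zero => simpa using hxy t
  | succ k ih =>
    have hsub : Ico c (c + k) ⊆ Ico c (c + (k + 1 : ℕ)) :=
      Ico_subset_Ico_right (by push_cast; omega)
    replace ih {t : ℕ} := @ih (settled_mono hsub le_rfl hx) (settled_mono hsub le_rfl hy) t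
    rw [mul_add_one] at ht
    obtain ⟨s, rfl⟩ := Nat.exists_eq_add_of_le (show n ≤ t by omega)
    intro i hi
    rcases (show i ≤ c + k by push_cast at hi; simp only [mem_Iio] at hi; omega).lt_or_eq
      with hik | rfl
    · exact ih (by omega) hik
    · have hmem : c + (k : ℤ) ∈ Ico c (c + (k + 1 : ℕ)) := ⟨by omega, hi⟩
      rw [iterate_add_apply, iterate_add_apply]
      exact hG.apply_eq ((hf.commute_translate _).iterate_left n) (hx s (by omega) _ hmem)
        (hy s (by omega) _ hmem) (ih (by omega))

end Comparison

end CellularAutomata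

/-! ### Enabling by the empty word -/

section Enabling

variable [TopologicalSpace A] [DiscreteTopology A] [Finite A] {f : (ℤ → A) → ℤ → A}
  {O U V : Set (ℤ → A)}

lemma exists_isOpen_forall_exists_eqOn_iterate {n : ℕ} (hf : IsCA f) (hn : n ≠ 0)
    (hobl : IsLeftObliqueOn f^[n] (genLimitSet f)) (hU : IsOpen U) (hU' : U.Nonempty)
    (hV : IsOpen V) (hV' : V.Nonempty) (d : ℤ) :
    ∃ W ⊆ V, IsOpen W ∧ W.Nonempty ∧ ∃ T, ∀ x ∈ W, ∃ z ∈ U, ∀ t ≥ T,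
      EqOn (f^[t] z) (f^[t] x) (Iio d) := by
  obtain ⟨G, hG, hfG, hobl⟩ :=
    hobl.exists_isOpen (hf.1.iterate n) (isClosed_genLimitSet f).isCompact
  obtain ⟨r, hr⟩ := hf.exists_hasRightRadius
  obtain ⟨Z, -, hZ, hZ', T₀, hT₀⟩ := hf.exists_isOpen_subset_settled hG hfG
    (finite_Ico (0 - (r * n : ℕ) : ℤ) 0) hU hU'
  obtain ⟨c, s, B, hcs, hB, hBZ, hBU, hBs, v, hv⟩ :=
    exists_barrier hU hU' hV hV' hZ hZ' (r * (T₀ + n))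
  have hBT {x : ℤ → A} (hx : x ∈ B) : x ∈ settled f G (Ico (c - (r * n : ℕ)) c) T₀ := by
    have := hf.mem_settled_of_translate_mem (hT₀ (hBZ hx))
    rwa [zero_add, zero_sub, neg_add_eq_sub] at this
  set k : ℕ := (d - c).toNat
  obtain ⟨U₁, hU₁, hU₁o, ⟨y, hy⟩, T₁, hT₁⟩ := hf.exists_isOpen_subset_settled hG hfG
    (finite_Ico c (c + k)) (hB.inter hU) hBU
  have hyv : EqOn y ((Iio s).piecewise y v) (Iio s) := (piecewise_eqOn _ _ _).symm
  have hy' : (Iio s).piecewise ((Iio s).piecewise y v) y ∈ U₁ := by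
    have hglue : (Iio s).piecewise ((Iio s).piecewise y v) y = y := by
      ext i
      by_cases hi : i ∈ Iio s <;> simp [hi]
    rwa [hglue]
  obtain ⟨W, hW, hWo, hW', T₂, hT₂⟩ := hf.exists_isOpen_subset_settled hG hfG
    (finite_Ico c (c + k))
    ((hB.inter hV).inter (hU₁o.preimage (continuous_piecewise_left (Iio s) y)))
    ⟨(Iio s).piecewise y v, ⟨hBs y (hU₁ hy).1 _ hyv, hv y⟩, hy'⟩
  refine ⟨W, fun x hx => (hW hx).1.2, hWo, hW', max T₁ T₂ + n * k, fun x hx => ?_⟩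
  have hz : (Iio s).piecewise x y ∈ U₁ := (hW hx).2
  have hleft := eqOn_iterate_of_settled hf hr hn hobl (hBT (hU₁ hz).1) (hBT (hW hx).1.1)
    ((piecewise_eqOn _ _ _).mono (Iio_subset_Iio hcs))
  refine ⟨_, (hU₁ hz).2, fun t ht => ?_⟩
  exact (eqOn_iterate_Iio_add hf hobl k (settled_mono subset_rfl (le_max_left _ _) (hT₁ hz))
    (settled_mono subset_rfl (le_max_right _ _) (hT₂ hx)) hleft ht).mono
      (Iio_subset_Iio (by omega))

lemma IsLeftObliqueOn.frequently_image_inter_nonempty {n : ℕ}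
    (hobl : IsLeftObliqueOn f^[n] (genLimitSet f)) (hf : IsCA f) (hO : IsOpen O)
    (hO' : (genLimitSet f ∩ O).Nonempty) (hU : IsOpen U) (hU' : U.Nonempty) :
    ∃ᶠ t in atTop, (f^[t] '' U ∩ O).Nonempty := by
  obtain ⟨m, hm, hobl⟩ := hobl.exists_ne_zero hf
  obtain ⟨x₀, hx₀, hx₀O⟩ := hO'
  obtain ⟨_, ⟨w, i, rfl⟩, hx₀w, hwO⟩ :=
    isTopologicalBasis_cylinder.exists_subset_of_mem_open hx₀O hO
  obtain ⟨V, hV, hV', hVw⟩ := exists_isOpen_frequently_image_inter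
    (isClopen_cylinder w i).isOpen ⟨x₀, hx₀, hx₀w⟩
  obtain ⟨W, hWV, hW, hW', T, hWU⟩ :=
    exists_isOpen_forall_exists_eqOn_iterate hf hm hobl hU hU' hV hV' (i + w.length)
  refine ((hVw W hWV hW hW').and_eventually (eventually_ge_atTop T)).mono ?_
  rintro t ⟨⟨_, ⟨x, hx, rfl⟩, hxw⟩, ht⟩
  obtain ⟨z, hz, hzx⟩ := hWU x hx
  exact ⟨_, mem_image_of_mem _ hz,
    hwO ((mem_cylinder_congr ((hzx t ht).mono Ico_subset_Iio_self)).2 hxw)⟩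

lemma IsCA.frequently_image_inter_nonempty (hf : IsCA f)
    (hobl : EventuallyOblique f (genLimitSet f)) (hO : IsOpen O)
    (hO' : (genLimitSet f ∩ O).Nonempty) (hU : IsOpen U) (hU' : U.Nonempty) :
    ∃ᶠ t in atTop, (f^[t] '' U ∩ O).Nonempty := by
  obtain ⟨n, hleft | hright⟩ := hobl.isLeftObliqueOn_or_reflect
  · exact hleft.frequently_image_inter_nonempty hf hO hO' hU hU'
  obtain ⟨x, hx, hxO⟩ := hO'
  have hmeet := hright.frequently_image_inter_nonempty hf.conj_reflect
    (hO.preimage reflect.continuous)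
    ⟨reflect x, map_mem_genLimitSet reflect (semiconj_reflect f) hx, by simpa using hxO⟩
    (hU.preimage reflect.continuous) (hU'.preimage reflect.surjective)
  refine hmeet.mono ?_
  rintro t ⟨_, ⟨z, hz, rfl⟩, hzO⟩
  refine ⟨_, mem_image_of_mem _ hz, ?_⟩
  rwa [mem_preimage, ((semiconj_reflect_conj f).iterate_right t).eq] at hzO

end Enabling

/-- if the restriction of `f` to `ω̃(f)` is eventually oblique, then a word
`w` occurs in `ω̃(f)` iff the empty word enables it: for every cylinder `[u]_j` there are
infinitely many `t` with `f^t([u]_j) ∩ [w] ≠ ∅`. -/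
theorem stmt11 [Fintype A] [Nonempty A] [TopologicalSpace A] [DiscreteTopology A]
    (f : (ℤ → A) → (ℤ → A)) (hf : IsCA f)
    (hob : EventuallyOblique f (genLimitSet f)) :
    ∀ w : List A, w ∈ lang (genLimitSet f) ↔
      ∀ (u : List A) (j : ℤ),
        {t : ℕ | (f^[t] '' cylinder u j ∩ cylinder w 0).Nonempty}.Infinite := by
  intro w
  simp only [← Nat.frequently_atTop_iff_infinite]
  constructor
  · rintro ⟨x, hx, i, hxw⟩ u j
    refine hf.frequently_image_inter_nonempty hob (isClopen_cylinder w 0).isOpen ?_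
      (isClopen_cylinder u j).isOpen (cylinder_nonempty u j)
    have hxw : x ∈ cylinder w (0 + i) := by rwa [zero_add]
    exact ⟨translate i x, hf.translate_mem_genLimitSet i hx, translate_mem_cylinder.2 hxw⟩
  · intro h
    obtain ⟨x, hx, hxw⟩ := genLimitSet_inter_nonempty_of_frequently hf.1
      (isClopen_cylinder w 0).isClosed fun U hU hU' => by
        obtain ⟨u, j, -, huU⟩ := exists_cylinder_subset hU hU'
        exact (h u j).mono fun t ht => ht.mono (inter_subset_inter_left _ (image_mono huU))
    exact ⟨x, hx, 0, hxw⟩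

end Gls
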